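/- arXiv:2412.14012 — 2 statements merged into one kernel-verified Lean document; each statement's English description precedes it below -/
import Mathlib

section
/- Let k be a field and let i ≥ 2. Then there exists a regular nilpotent i×i matrix X over k (i.e. X nilpotent with X^{i−1} ≠ 0) such that the leading principal submatrix X_{≤h,≤h} is invertible for every h ∈ {1,…,i−1}. -/
/-!
Let `N` be the nilpotent Jordan block of size `n` with ones on the superdiagonal, `L = 1 - Nᵀ` and
`X = L⁻¹ * N * L`. As a conjugate of `N`, the matrix `X` is regular nilpotent. To see its corners,
read the definition as `L * X = N - N * Nᵀ`. Since `L` is lower triangular, the leading `h × h`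
corner of `L * X` is the product of the corners of `L` and `X`; and `N * Nᵀ` is the diagonal matrix
`(1, …, 1, 0)`, so for `h < n` its corner is the identity. With `N_h` the Jordan block of size `h`
and `X_h` the corner of `X`, this says `(1 - N_hᵀ) * X_h = N_h - 1`, where both `1 - N_hᵀ` and
`N_h - 1` are invertible because `N_h` is nilpotent.
-/

theorem units_conj_pow_eq_zero_iff {M : Type*} [MonoidWithZero M] (u : Mˣ) (x : M) (m : ℕ) :
    (↑u⁻¹ * x * ↑u) ^ m = 0 ↔ x ^ m = 0 := by
  rw [Units.conj_pow', Units.mul_left_eq_zero, Units.mul_right_eq_zero]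

open Matrix

theorem submatrix_mul_of_isLowerTriangular {l m o p R : Type*} [LinearOrder m] [Fintype m]
    [Fintype o] [NonUnitalNonAssocSemiring R] {A : Matrix m m R} (hA : A.IsLowerTriangular)
    (B : Matrix m p R) {e : o → m} (he : Function.Injective e) (he' : IsLowerSet (Set.range e))
    (f : l → p) :
    (A * B).submatrix e f = A.submatrix e e * B.submatrix e f := by
  ext a b
  simp only [submatrix_apply, mul_apply]
  refine (Fintype.sum_of_injective e he _ _ (fun c hc => ?_) fun _ => rfl).symm
  have hac : e a < c := not_le.1 fun hca => hc (he' hca (Set.mem_range_self a))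
  rw [hA hac, zero_mul]

/-- The nilpotent Jordan block of size `n`, with ones on the superdiagonal. -/
def nilpotentJordanBlock (R : Type*) [Zero R] [One R] (n : ℕ) : Matrix (Fin n) (Fin n) R :=
  of fun a b => if (a : ℕ) + 1 = b then 1 else 0

section ZeroOne

variable {R : Type*} [Zero R] [One R]

theorem nilpotentJordanBlock_apply {n : ℕ} (a b : Fin n) :
    nilpotentJordanBlock R n a b = if (a : ℕ) + 1 = b then 1 else 0 :=
  rfl

theorem nilpotentJordanBlock_submatrix_castLE {h n : ℕ} (hn : h ≤ n) :
    (nilpotentJordanBlock R n).submatrix (Fin.castLE hn) (Fin.castLE hn) =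
      nilpotentJordanBlock R h :=
  rfl

theorem isUpperTriangular_nilpotentJordanBlock (n : ℕ) :
    (nilpotentJordanBlock R n).IsUpperTriangular := by
  intro a b hba
  have hba' : b < a := hba
  rw [nilpotentJordanBlock_apply, if_neg (by omega)]

theorem nilpotentJordanBlock_submatrix_rev (n : ℕ) :
    (nilpotentJordanBlock R n).submatrix Fin.rev Fin.rev = (nilpotentJordanBlock R n)ᵀ := by
  ext a b
  simp only [submatrix_apply, transpose_apply, nilpotentJordanBlock_apply, Fin.val_rev]
  exact if_congr (by omega) rfl rfl

end ZeroOne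

section Semiring

variable {R : Type*} [Semiring R] {n : ℕ}

theorem nilpotentJordanBlock_mul_apply_of_lt {p : Type*} (M : Matrix (Fin n) p R) {a : Fin n}
    (ha : (a : ℕ) + 1 < n) (b : p) : (nilpotentJordanBlock R n * M) a b = M ⟨a + 1, ha⟩ b := by
  rw [mul_apply, Fintype.sum_eq_single ⟨a + 1, ha⟩]
  · simp [nilpotentJordanBlock_apply]
  · intro c hc
    rw [nilpotentJordanBlock_apply, if_neg fun h => hc (Fin.ext h.symm), zero_mul]

theorem nilpotentJordanBlock_mul_apply_of_le {p : Type*} (M : Matrix (Fin n) p R) {a : Fin n}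
    (ha : n ≤ (a : ℕ) + 1) (b : p) : (nilpotentJordanBlock R n * M) a b = 0 := by
  rw [mul_apply]
  refine Finset.sum_eq_zero fun c _ => ?_
  rw [nilpotentJordanBlock_apply, if_neg (by omega), zero_mul]

theorem nilpotentJordanBlock_pow_apply (m : ℕ) (a b : Fin n) :
    (nilpotentJordanBlock R n ^ m) a b = if (a : ℕ) + m = b then 1 else 0 := by
  induction m generalizing a with
  | zero => simp only [pow_zero, one_apply, Fin.ext_iff, add_zero]
  | succ m ih =>
    rw [pow_succ']
    obtain ha | ha := lt_or_ge ((a : ℕ) + 1) n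
    · rw [nilpotentJordanBlock_mul_apply_of_lt _ ha, ih]
      exact if_congr (by simp only; omega) rfl rfl
    · rw [nilpotentJordanBlock_mul_apply_of_le _ ha, if_neg (by omega)]

theorem nilpotentJordanBlock_pow_eq_zero_iff [Nontrivial R] {m : ℕ} :
    nilpotentJordanBlock R n ^ m = 0 ↔ n ≤ m := by
  constructor
  · intro h
    by_contra! hm
    have hentry := congrFun₂ h ⟨0, by omega⟩ ⟨m, hm⟩
    simp [nilpotentJordanBlock_pow_apply] at hentry
  · intro hm
    ext a b
    rw [nilpotentJordanBlock_pow_apply, if_neg (by omega), Matrix.zero_apply]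

variable (n) in
theorem isNilpotent_nilpotentJordanBlock : IsNilpotent (nilpotentJordanBlock R n) := by
  nontriviality R
  exact ⟨n, nilpotentJordanBlock_pow_eq_zero_iff.2 le_rfl⟩

variable (n) in
theorem isNilpotent_transpose_nilpotentJordanBlock :
    IsNilpotent (nilpotentJordanBlock R n)ᵀ := by
  -- `R` may be noncommutative, so `Matrix.transpose_pow` is not available; reverse the basis.
  rw [← nilpotentJordanBlock_submatrix_rev]
  exact (isNilpotent_nilpotentJordanBlock n).map (reindexRingEquiv R Fin.revPerm)

theorem nilpotentJordanBlock_submatrix_mul_transpose {h : ℕ} (hn : h < n) :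
    (nilpotentJordanBlock R n * (nilpotentJordanBlock R n)ᵀ).submatrix
      (Fin.castLE hn.le) (Fin.castLE hn.le) = 1 := by
  ext a b
  have ha : (Fin.castLE hn.le a : ℕ) + 1 < n := by rw [Fin.val_castLE]; omega
  rw [submatrix_apply, nilpotentJordanBlock_mul_apply_of_lt _ ha]
  simp [nilpotentJordanBlock_apply, one_apply, Fin.ext_iff, eq_comm]

end Semiring

theorem isUnit_submatrix_of_one_sub_transpose_mul_eq {R : Type*} [Ring R] {h n : ℕ}
    {X : Matrix (Fin n) (Fin n) R}
    (hX : (1 - (nilpotentJordanBlock R n)ᵀ) * X =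
      nilpotentJordanBlock R n * (1 - (nilpotentJordanBlock R n)ᵀ))
    (hn : h < n) : IsUnit (X.submatrix (Fin.castLE hn.le) (Fin.castLE hn.le)) := by
  set e : Fin h → Fin n := Fin.castLE hn.le
  have he : Function.Injective e := Fin.castLE_injective hn.le
  have he_lower : IsLowerSet (Set.range e) := by
    rw [Fin.range_castLE]
    exact fun a b hba ha => lt_of_le_of_lt (Fin.le_def.1 hba) ha
  have hL : (1 - (nilpotentJordanBlock R n)ᵀ).IsLowerTriangular :=
    blockTriangular_one.sub (isUpperTriangular_nilpotentJordanBlock n).transpose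
  have hL_corner : (1 - (nilpotentJordanBlock R n)ᵀ).submatrix e e =
      1 - (nilpotentJordanBlock R h)ᵀ := by
    rw [submatrix_sub, Pi.sub_apply, Pi.sub_apply, submatrix_one e he, ← transpose_submatrix,
      nilpotentJordanBlock_submatrix_castLE]
  have hcorner : (1 - (nilpotentJordanBlock R h)ᵀ) * X.submatrix e e =
      nilpotentJordanBlock R h - 1 := by
    rw [← hL_corner, ← submatrix_mul_of_isLowerTriangular hL X he he_lower, hX, mul_sub, mul_one,
      submatrix_sub, Pi.sub_apply, Pi.sub_apply, nilpotentJordanBlock_submatrix_castLE,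
      nilpotentJordanBlock_submatrix_mul_transpose hn]
  obtain ⟨u, hu⟩ := (isNilpotent_transpose_nilpotentJordanBlock (R := R) h).isUnit_one_sub
  rw [← u.isUnit_units_mul, hu, hcorner]
  exact (isNilpotent_nilpotentJordanBlock h).isUnit_sub_one

theorem exists_regular_nilpotent_with_all_invertible_corners_general {R : Type*} [Ring R]
    [Nontrivial R] (n : ℕ) (hn : n ≠ 0) :
    ∃ X : Matrix (Fin n) (Fin n) R, IsNilpotent X ∧ X ^ (n - 1) ≠ 0 ∧
      ∀ (h : ℕ) (hh : h < n),
        IsUnit (X.submatrix (Fin.castLE hh.le) (Fin.castLE hh.le)) := by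
  obtain ⟨L, hL⟩ := (isNilpotent_transpose_nilpotentJordanBlock (R := R) n).isUnit_one_sub
  let X : Matrix (Fin n) (Fin n) R := L⁻¹.val * nilpotentJordanBlock R n * L.val
  have hX_pow (m : ℕ) : X ^ m = 0 ↔ n ≤ m :=
    (units_conj_pow_eq_zero_iff L _ m).trans nilpotentJordanBlock_pow_eq_zero_iff
  refine ⟨X, ⟨n, (hX_pow n).2 le_rfl⟩, ?_, fun h hh => ?_⟩
  · rw [Ne, hX_pow]
    omega
  · refine isUnit_submatrix_of_one_sub_transpose_mul_eq ?_ hh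
    rw [← hL, ← mul_assoc, Units.mul_inv_cancel_left]

/-- For any field `k` and any `i ≥ 2`, there exists a regular nilpotent `i × i` matrix `X`
over `k` (i.e. `X` nilpotent with `X ^ (i-1) ≠ 0`) such that the leading principal `h × h`
submatrix `X_{≤h,≤h}` is invertible for every `h ∈ {1, …, i-1}`. -/
theorem exists_regular_nilpotent_with_all_invertible_corners {k : Type*} [Field k]
    (i : ℕ) (hi : 2 ≤ i) :
    ∃ X : Matrix (Fin i) (Fin i) k, IsNilpotent X ∧ X ^ (i - 1) ≠ 0 ∧
      ∀ (h : ℕ), 1 ≤ h → ∀ (hh2 : h < i),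
        IsUnit (X.submatrix (Fin.castLE hh2.le) (Fin.castLE hh2.le)) := by
  obtain ⟨X, hX, hX_pow, hX_corner⟩ :=
    exists_regular_nilpotent_with_all_invertible_corners_general (R := k) i (by omega)
  exact ⟨X, hX, hX_pow, fun h _ hh => hX_corner h hh⟩
end

section
/- Let k be a field, let λ be a partition of n, and let 1 ≤ i ≤ n−1. Then: (a) for every nilpotent n×n matrix X over k of Jordan type λ and every j with d_{λ,i} < j ≤ i, one has s_j(X_{≤i,≤i}) = 0; and (b) there exists a nilpotent n×n matrix X over k of Jordan type λ with s_{d_{λ,i}}(X_{≤i,≤i}) ≠ 0. -/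
/-!
Put `r = n - i` and `t = λ_{r+1} + ⋯ + λ_n`, so that `d_{λ,i} = i - t`. Up to sign, `s_j(Y)` is the
coefficient of `x^(i-j)` in the characteristic polynomial of `Y = X_{≤i,≤i}`, so the claim is that
this polynomial vanishes at `0` to order at least `t`, and that order exactly `t` occurs. The order
of vanishing is the dimension of the largest subspace on which `Y` is nilpotent.

For the lower bound, let `W` be the span of the last `r` coordinate vectors and `S = k[X]W`. Modulo
`S` the compression `Y` agrees with `X`, so it is nilpotent there and the order is at least
`n - dim S`. The layer `X^m S / X^(m+1) S` has dimension at most `r`, because `W` generates `S`, and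
at most `rank X^m - rank X^(m+1) = λ'_{m+1}`. Summing `min (r, λ'_{m+1})` over `m` gives
`dim S ≤ λ_1 + ⋯ + λ_r = n - t`.

For the upper bound, let `X` shift the functions on the boxes of the diagram of `λ` one step to the
left along the rows. Choose `p_j ≤ λ_j` with sum `i` such that `p_j < λ_j` or `λ_j = 0` for `j ≤ r`,
and `p_j = λ_j` for `j > r`. Restrict functions to the first `p_j` boxes of row `j`, and
extend them back with period `p_j`. If `p_j < λ_j`, the resulting compression of `X` rotates
row `j` cyclically and so is invertible there. Only the complete rows can contribute to the order of
vanishing, and they have `t` boxes in total.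
-/

/-- `l` is a partition of `n`: weakly decreasing, parts beyond position `n` are zero,
and the parts sum to `n`. Parts are `0`-indexed: `λ_j = l (j - 1)` for `j ≥ 1`. -/
def IsPartition (n : ℕ) (l : ℕ → ℕ) : Prop :=
  Antitone l ∧ (∀ j, n ≤ j → l j = 0) ∧ ∑ j ∈ Finset.range n, l j = n

/-- `d_{λ,i} = i - ∑_{j = n - i + 1}^{n} λ_j` (with `0`-indexed parts `λ_j = l (j-1)`). -/
def dPart (n : ℕ) (l : ℕ → ℕ) (i : ℕ) : ℕ :=
  i - ∑ j ∈ Finset.Ico (n - i) n, l j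

/-- An `n × n` matrix `X` has Jordan type `λ` iff
`rank (X ^ m) = ∑_j max (λ_j - m) 0` for all `m ≥ 0`. -/
def HasJordanType {k : Type*} [Field k] {n : ℕ} (X : Matrix (Fin n) (Fin n) k)
    (l : ℕ → ℕ) : Prop :=
  ∀ m : ℕ, (X ^ m).rank = ∑ j ∈ Finset.range n, (l j - m)

/-- `s_j(Y)`, the trace of the `j`-th exterior power of `Y` (the sum of the principal
`j × j` minors of `Y`), characterized by
`det (a • 1 - Y) = a^i + ∑_{j=1}^{i} (-1)^j a^(i-j) s_j(Y)`; i.e. up to sign it is a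
coefficient of the characteristic polynomial: `s_j(Y) = (-1)^j * (charpoly Y).coeff (i - j)`. -/
noncomputable def sElem {k : Type*} [Field k] {i : ℕ} (Y : Matrix (Fin i) (Fin i) k)
    (j : ℕ) : k :=
  (-1) ^ j * (Matrix.charpoly Y).coeff (i - j)

section Counting

open Finset

variable {ι : Type*}

lemma sum_tsub_eq_sum_tsub_succ_add_card (s : Finset ι) (l : ι → ℕ) (m : ℕ) :
    ∑ j ∈ s, (l j - m) = ∑ j ∈ s, (l j - (m + 1)) + #{j ∈ s | m < l j} := by
  rw [card_filter, ← sum_add_distrib]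
  refine sum_congr rfl fun j _ => ?_
  split_ifs <;> lia

lemma sum_card_filter_lt_le (s : Finset ι) (l : ι → ℕ) (N : ℕ) :
    ∑ m ∈ range N, #{j ∈ s | m < l j} ≤ ∑ j ∈ s, l j :=
  calc ∑ m ∈ range N, #{j ∈ s | m < l j}
    _ = ∑ j ∈ s, #{m ∈ range N | m < l j} :=
      sum_card_bipartiteAbove_eq_sum_card_bipartiteBelow fun m j => m < l j
    _ ≤ ∑ j ∈ s, l j := sum_le_sum fun j _ =>
      (card_le_card fun _ hm => mem_range.2 (mem_filter.1 hm).2).trans_eq (card_range (l j))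

lemma exists_le_sum_eq {s : Finset ι} {g : ι → ℕ} {t : ℕ} (ht : t ≤ ∑ j ∈ s, g j) :
    ∃ p ≤ g, ∑ j ∈ s, p j = t := by
  classical
  induction t with
  | zero => exact ⟨0, fun _ => Nat.zero_le _, sum_const_zero⟩
  | succ t ih =>
    obtain ⟨p, hpg, hpt⟩ := ih (Nat.le_of_succ_le ht)
    obtain ⟨a, ha, hlt⟩ := exists_lt_of_sum_lt (hpt.trans_lt ht)
    refine ⟨p + Pi.single a 1, fun j => ?_, ?_⟩
    · obtain rfl | hj := eq_or_ne j a
      · simpa using hlt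
      · simpa [hj] using hpg j
    · simp [sum_add_distrib, hpt, ha]

lemma min_card_filter_lt_le_of_antitone {l : ℕ → ℕ} (hl : Antitone l) (r n m : ℕ) :
    min r #{j ∈ range n | m < l j} ≤ #{j ∈ range r | m < l j} := by
  by_cases hfull : ∀ j ∈ range r, m < l j
  · rw [filter_true_of_mem hfull, card_range]
    exact min_le_left _ _
  · push Not at hfull
    obtain ⟨j₀, hj₀, hle⟩ := hfull
    refine (min_le_right _ _).trans (card_le_card fun j hj => ?_)
    obtain ⟨-, hj⟩ := mem_filter.1 hj
    have hjj₀ : j < j₀ := hl.reflect_lt (hle.trans_lt hj)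
    exact mem_filter.2 ⟨mem_range.2 (hjj₀.trans (mem_range.1 hj₀)), hj⟩

lemma sum_min_sum_tsub_sub_le_of_antitone {l : ℕ → ℕ} (hl : Antitone l) (r n N : ℕ) :
    ∑ m ∈ range N, min r (∑ j ∈ range n, (l j - m) - ∑ j ∈ range n, (l j - (m + 1))) ≤
      ∑ j ∈ range r, l j := by
  refine (sum_le_sum fun m _ => ?_).trans (sum_card_filter_lt_le (range r) l N)
  rw [sum_tsub_eq_sum_tsub_succ_add_card, Nat.add_sub_cancel_left]
  exact min_card_filter_lt_le_of_antitone hl r n m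

end Counting

section Partition

open Finset

variable {n : ℕ} {l : ℕ → ℕ}

lemma IsPartition.le_self (hl : IsPartition n l) (j : ℕ) : l j ≤ n := by
  obtain hj | hj := lt_or_ge j n
  · exact (single_le_sum (fun _ _ => Nat.zero_le _) (mem_range.2 hj)).trans_eq hl.2.2
  · exact (hl.2.1 j hj).trans_le (Nat.zero_le n)

lemma IsPartition.sum_range_add_sum_Ico (hl : IsPartition n l) {r : ℕ} (hr : r ≤ n) :
    ∑ j ∈ range r, l j + ∑ j ∈ Ico r n, l j = n :=
  (Finset.sum_range_add_sum_Ico l hr).trans hl.2.2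

lemma IsPartition.sum_Ico_le (hl : IsPartition n l) (i : ℕ) :
    ∑ j ∈ Ico (n - i) n, l j ≤ i := by
  have htotal := hl.sum_range_add_sum_Ico (Nat.sub_le n i)
  obtain hzero | hpos := Nat.eq_zero_or_pos (l (n - i))
  · have htail : ∑ j ∈ Ico (n - i) n, l j = 0 := sum_eq_zero fun j hj =>
      Nat.eq_zero_of_le_zero ((hl.1 (mem_Ico.1 hj).1).trans_eq hzero)
    lia
  · have hhead : n - i ≤ ∑ j ∈ range (n - i), l j := by
      simpa using card_nsmul_le_sum (range (n - i)) l 1 fun j hj =>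
        hpos.trans_le (hl.1 (mem_range.1 hj).le)
    lia

lemma IsPartition.exists_le_sum_eq_sum_filter_le (hl : IsPartition n l) {i : ℕ} (hin : i ≤ n) :
    ∃ p ≤ l, ∑ j ∈ range n, p j = i ∧
      ∑ j ∈ range n with p j = l j, p j ≤ ∑ j ∈ Ico (n - i) n, l j := by
  have htotal := hl.sum_range_add_sum_Ico (Nat.sub_le n i)
  have htail := hl.sum_Ico_le i
  have hhead : ∑ j ∈ range (n - i), l j ≤ ∑ j ∈ range (n - i), (l j - 1) + (n - i) :=
    calc ∑ j ∈ range (n - i), l j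
      _ ≤ ∑ j ∈ range (n - i), (l j - 1 + 1) := sum_le_sum fun j _ => le_tsub_add
      _ = ∑ j ∈ range (n - i), (l j - 1) + (n - i) := by simp [sum_add_distrib]
  obtain ⟨q, hq, hqsum⟩ := exists_le_sum_eq
    (show i - ∑ j ∈ Ico (n - i) n, l j ≤ ∑ j ∈ range (n - i), (l j - 1) by lia)
  have hqle (j : ℕ) : q j ≤ l j - 1 := hq j
  let p : ℕ → ℕ := fun j => if j < n - i then q j else l j
  have hp_head (j : ℕ) (hj : j ∈ range (n - i)) : p j = q j := if_pos (mem_range.1 hj)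
  have hp_tail (j : ℕ) (hj : j ∈ Ico (n - i) n) : p j = l j := if_neg (mem_Ico.1 hj).1.not_gt
  refine ⟨p, fun j => ?_, ?_, ?_⟩
  · have := hqle j
    dsimp only [p]
    split_ifs <;> lia
  · rw [← Finset.sum_range_add_sum_Ico p (Nat.sub_le n i), sum_congr rfl hp_head,
      sum_congr rfl hp_tail, hqsum]
    lia
  · rw [sum_filter, ← Finset.sum_range_add_sum_Ico _ (Nat.sub_le n i),
      sum_eq_zero fun j hj => ite_eq_right_iff.2 fun hpl => ?_, zero_add]
    · exact sum_le_sum fun j hj => by split_ifs <;> simp [hp_tail j hj]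
    · have := hqle j
      have := hp_head j hj
      lia

end Partition

section KrylovSpan

open Module LinearMap

variable {R M : Type*} [Semiring R] [AddCommMonoid M] [Module R M]

/-- The smallest `f`-invariant submodule containing `W`, encoded as the sum of the images of `W`
under the powers of `f` so that its layers `f ^ m S / f ^ (m + 1) S` can be bounded by `W`. -/
def krylovSpan (f : End R M) (W : Submodule R M) : Submodule R M :=
  ⨆ m : ℕ, W.map (f ^ m)

lemma map_pow_succ (f : End R M) (S : Submodule R M) (m : ℕ) :
    S.map (f ^ (m + 1)) = (S.map (f ^ m)).map f := by
  rw [← Submodule.map_comp, pow_succ', End.mul_eq_comp]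

lemma krylovSpan_eq_sup_map (f : End R M) (W : Submodule R M) :
    krylovSpan f W = W ⊔ (krylovSpan f W).map f := by
  simp only [krylovSpan, Submodule.map_iSup, ← map_pow_succ]
  rw [← sup_iSup_nat_succ, pow_zero, End.one_eq_id, Submodule.map_id]

lemma le_krylovSpan (f : End R M) (W : Submodule R M) : W ≤ krylovSpan f W :=
  le_sup_left.trans_eq (krylovSpan_eq_sup_map f W).symm

lemma map_krylovSpan_le (f : End R M) (W : Submodule R M) :
    (krylovSpan f W).map f ≤ krylovSpan f W :=
  le_sup_right.trans_eq (krylovSpan_eq_sup_map f W).symm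

end KrylovSpan

section Dimension

open Module LinearMap

variable {K V V' : Type*} [DivisionRing K] [AddCommGroup V] [Module K V] [FiniteDimensional K V]
  [AddCommGroup V'] [Module K V']

lemma finrank_map_add_finrank_inf_ker (f : V →ₗ[K] V') (S : Submodule K V) :
    finrank K (S.map f) + finrank K (S ⊓ ker f : Submodule K V) = finrank K S := by
  rw [← finrank_range_add_finrank_ker (f.domRestrict S), range_domRestrict, ker_domRestrict,
    ← Submodule.map_comap_subtype, Submodule.finrank_map_subtype_eq]

lemma finrank_add_finrank_map_le (f : V →ₗ[K] V') {S T : Submodule K V} (hST : S ≤ T) :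
    finrank K S + finrank K (T.map f) ≤ finrank K (S.map f) + finrank K T := by
  have hker := Submodule.finrank_mono (inf_le_inf_right (ker f) hST)
  have hS := finrank_map_add_finrank_inf_ker f S
  have hT := finrank_map_add_finrank_inf_ker f T
  lia

lemma finrank_map_pow_add_finrank_range_le (f : End K V) (S : Submodule K V) (m : ℕ) :
    finrank K (S.map (f ^ m)) + finrank K (range (f ^ (m + 1))) ≤
      finrank K (S.map (f ^ (m + 1))) + finrank K (range (f ^ m)) := by
  rw [← Submodule.map_top, ← Submodule.map_top, map_pow_succ, map_pow_succ]
  exact finrank_add_finrank_map_le f (Submodule.map_mono le_top)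

lemma finrank_map_pow_krylovSpan_le (f : End K V) (W : Submodule K V) (m : ℕ) :
    finrank K ((krylovSpan f W).map (f ^ m)) ≤
      finrank K ((krylovSpan f W).map (f ^ (m + 1))) + finrank K W := by
  have hlayer : (krylovSpan f W).map (f ^ m) =
      (krylovSpan f W).map (f ^ (m + 1)) ⊔ W.map (f ^ m) := by
    conv_lhs => rw [krylovSpan_eq_sup_map, Submodule.map_sup, ← Submodule.map_comp,
      ← End.mul_eq_comp, ← pow_succ, sup_comm]
  rw [hlayer]
  grw [Submodule.finrank_add_le_finrank_add_finrank, Submodule.finrank_map_le (f ^ m) W]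

theorem finrank_krylovSpan_le_sum_min (f : End K V) (W : Submodule K V) {N : ℕ}
    (hN : f ^ N = 0) :
    finrank K (krylovSpan f W) ≤ ∑ m ∈ Finset.range N,
      min (finrank K W) (finrank K (range (f ^ m)) - finrank K (range (f ^ (m + 1)))) := by
  have htelescope (n : ℕ) : finrank K (krylovSpan f W) ≤
      finrank K ((krylovSpan f W).map (f ^ n)) + ∑ m ∈ Finset.range n,
        min (finrank K W) (finrank K (range (f ^ m)) - finrank K (range (f ^ (m + 1)))) := by
    induction n with
    | zero => rw [pow_zero, End.one_eq_id, Submodule.map_id, Finset.sum_range_zero, add_zero]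
    | succ n ih =>
      have hker := finrank_map_pow_add_finrank_range_le f (krylovSpan f W) n
      have hgen := finrank_map_pow_krylovSpan_le f W n
      rw [Finset.sum_range_succ]
      lia
  have hbound := htelescope N
  rwa [hN, Submodule.map_zero, finrank_bot, zero_add] at hbound

end Dimension

section Compression

open Module LinearMap

variable {R M N : Type*} [Ring R] [AddCommGroup M] [Module R M] [AddCommGroup N] [Module R N]

lemma compression_pow_sub_mem {f : End R M} {e : N →ₗ[R] M} {p : M →ₗ[R] N}
    (hpe : p ∘ₗ e = .id) {S : Submodule R M} (hS : S.map f ≤ S) (hp : ker p ≤ S) (m : ℕ) (u : N) :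
    e (((p ∘ₗ f ∘ₗ e) ^ m) u) - (f ^ m) (e u) ∈ S := by
  have hpe' (u : N) : p (e u) = u := LinearMap.congr_fun hpe u
  induction m with
  | zero => simp
  | succ m ih =>
    set v := ((p ∘ₗ f ∘ₗ e) ^ m) u with hv
    have hproj : e (p (f (e v))) - f (e v) ∈ S := hp (by simp [hpe'])
    have hstep : f (e v) - f ((f ^ m) (e u)) ∈ S := by
      rw [← map_sub]
      exact hS (Submodule.mem_map_of_mem ih)
    simpa [pow_succ', ← hv] using S.add_mem hproj hstep

end Compression

section NullComponent

open Module LinearMap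

variable {k V U : Type*} [Field k] [AddCommGroup V] [Module k V] [FiniteDimensional k V]
  [AddCommGroup U] [Module k U] [FiniteDimensional k U]

lemma finrank_le_natTrailingDegree_charpoly_add (Y : End k U) {Q : Submodule k U} {N : ℕ}
    (hQ : range (Y ^ N) ≤ Q) :
    finrank k U ≤ Y.charpoly.natTrailingDegree + finrank k Q := by
  have hker : finrank k (ker (Y ^ N)) ≤ Y.charpoly.natTrailingDegree := by
    rw [← finrank_maxGenEigenspace_zero_eq]
    refine Submodule.finrank_mono fun u hu => ?_
    exact (End.mem_maxGenEigenspace Y 0 u).2 ⟨N, by simpa using hu⟩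
  have hrange := Submodule.finrank_mono hQ
  have hrank_nullity := finrank_range_add_finrank_ker (Y ^ N)
  lia

lemma natTrailingDegree_charpoly_add_finrank_le {U' : Type*} [AddCommGroup U'] [Module k U']
    {Y : End k U} {C : End k U'} {g : U →ₗ[k] U'} (hg : Function.Surjective g)
    (hC : Function.Injective C) (hgY : g ∘ₗ Y = C ∘ₗ g) :
    Y.charpoly.natTrailingDegree + finrank k U' ≤ finrank k U := by
  have hker : Y.maxGenEigenspace 0 ≤ ker g := fun u hu => by
    obtain ⟨N, hN⟩ := (End.mem_maxGenEigenspace Y 0 u).1 hu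
    rw [zero_smul, sub_zero] at hN
    have hcomm : (C ^ N) (g u) = g ((Y ^ N) u) :=
      LinearMap.congr_fun (End.commute_pow_left_of_commute hgY.symm N) u
    exact End.iterate_injective hC N (by rw [hcomm, hN, map_zero, map_zero])
  have hmono := Submodule.finrank_mono hker
  have hrank_nullity := finrank_range_add_finrank_ker g
  rw [range_eq_top.2 hg, finrank_top] at hrank_nullity
  rw [finrank_maxGenEigenspace_zero_eq] at hmono
  lia

theorem finrank_le_natTrailingDegree_charpoly_compression_add {f : End k V} {e : U →ₗ[k] V}
    {p : V →ₗ[k] U} (hpe : p ∘ₗ e = .id) (hf : IsNilpotent f) {S : Submodule k V}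
    (hS : S.map f ≤ S) (hp : ker p ≤ S) :
    finrank k V ≤ (p ∘ₗ f ∘ₗ e).charpoly.natTrailingDegree + finrank k S := by
  have hpe' (u : U) : p (e u) = u := LinearMap.congr_fun hpe u
  obtain ⟨N, hN⟩ := hf
  have hrange : range ((p ∘ₗ f ∘ₗ e) ^ N) ≤ S.map p := by
    rintro _ ⟨u, rfl⟩
    exact ⟨_, by simpa [hN] using compression_pow_sub_mem hpe hS hp N u, hpe' _⟩
  have hbound := finrank_le_natTrailingDegree_charpoly_add _ hrange
  have hSp := finrank_map_add_finrank_inf_ker p S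
  have hV := finrank_range_add_finrank_ker p
  rw [inf_eq_right.2 hp] at hSp
  rw [range_eq_top.2 fun u => ⟨e u, hpe' u⟩, finrank_top] at hV
  lia

theorem finrank_le_natTrailingDegree_charpoly_compression_add_sum_min {f : End k V}
    {e : U →ₗ[k] V} {p : V →ₗ[k] U} (hpe : p ∘ₗ e = .id) {N : ℕ} (hN : f ^ N = 0) :
    finrank k V ≤ (p ∘ₗ f ∘ₗ e).charpoly.natTrailingDegree + ∑ m ∈ Finset.range N,
      min (finrank k (ker p)) (finrank k (range (f ^ m)) - finrank k (range (f ^ (m + 1)))) :=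
  (finrank_le_natTrailingDegree_charpoly_compression_add hpe ⟨N, hN⟩ (map_krylovSpan_le f (ker p))
    (le_krylovSpan f (ker p))).trans
    (Nat.add_le_add_left (finrank_krylovSpan_le_sum_min f (ker p) hN) _)

end NullComponent

section CoordinateCompression

open Module LinearMap

variable {ι κ : Type*} {c : ι → κ}

lemma funLeft_comp_extendByZero {R : Type*} [Semiring R] (hc : Function.Injective c) :
    funLeft R R c ∘ₗ Function.ExtendByZero.linearMap R c = .id :=
  LinearMap.ext fun u => funext fun a => hc.extend_apply u 0 a

lemma extendByZero_single {R : Type*} [Semiring R] [DecidableEq ι] [DecidableEq κ]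
    (hc : Function.Injective c) (b : ι) :
    Function.ExtendByZero.linearMap R c (Pi.single b 1) = Pi.single (c b) 1 := by
  ext y
  rw [Function.ExtendByZero.linearMap_apply]
  obtain ⟨a, rfl⟩ | hy := em (∃ a, c a = y)
  · simp [hc.extend_apply, Pi.single_apply, hc.eq_iff]
  · rw [Function.extend_apply' _ _ _ hy, Pi.zero_apply,
      Pi.single_eq_of_ne fun hb => hy ⟨b, hb.symm⟩]

lemma toLin'_submatrix {R : Type*} [CommSemiring R] [Fintype ι] [DecidableEq ι] [Fintype κ]
    [DecidableEq κ] (hc : Function.Injective c) (X : Matrix κ κ R) :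
    (X.submatrix c c).toLin' =
      funLeft R R c ∘ₗ X.toLin' ∘ₗ Function.ExtendByZero.linearMap R c := by
  refine LinearMap.pi_ext' fun b => LinearMap.ext_ring (funext fun a => ?_)
  simp [funLeft_apply, extendByZero_single hc]

lemma finrank_ker_funLeft {K : Type*} [DivisionRing K] [Fintype ι] [Fintype κ]
    (hc : Function.Injective c) :
    finrank K (ker (funLeft K K c)) = Fintype.card κ - Fintype.card ι := by
  have h := finrank_range_add_finrank_ker (funLeft K K c)
  rw [range_eq_top.2 (funLeft_surjective_of_injective K K c hc), finrank_top, finrank_pi,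
    finrank_pi] at h
  lia

end CoordinateCompression

section RowShift

open Module
open LinearMap hiding id

variable {k ι : Type*} [Semiring k]

/-- The inclusion of the boxes of the diagram with row lengths `p` into those of the diagram with
row lengths `l`; box `a` of row `j` is the pair `⟨j, a⟩`, with `a` counted from `0`. -/
def rowInclusion {p l : ι → ℕ} (hpl : p ≤ l) : (Σ j, Fin (p j)) → Σ j, Fin (l j) :=
  Sigma.map id fun j => Fin.castLE (hpl j)

lemma rowInclusion_mk {p l : ι → ℕ} (hpl : p ≤ l) (j : ι) (a : Fin (p j)) :
    rowInclusion hpl ⟨j, a⟩ = ⟨j, Fin.castLE (hpl j) a⟩ := rfl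

lemma rowInclusion_injective {p l : ι → ℕ} (hpl : p ≤ l) :
    Function.Injective (rowInclusion hpl) :=
  Function.injective_id.sigma_map fun j => Fin.castLE_injective (hpl j)

variable (k) in
/-- The nilpotent endomorphism with Jordan blocks of sizes `l j`, realized on the functions on the
boxes of the diagram with row lengths `l`: every row is shifted one box to the left. -/
def rowShift (l : ι → ℕ) : End k ((Σ j, Fin (l j)) → k) where
  toFun v x := if h : x.2 + 1 < l x.1 then v ⟨x.1, ⟨x.2 + 1, h⟩⟩ else 0
  map_add' v w := by ext x; dsimp only [Pi.add_apply]; split_ifs <;> simp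
  map_smul' c v := by ext x; dsimp only [Pi.smul_apply]; split_ifs <;> simp

lemma rowShift_apply {l : ι → ℕ} (v : (Σ j, Fin (l j)) → k) (j : ι) (a : Fin (l j)) :
    rowShift k l v ⟨j, a⟩ = if h : a + 1 < l j then v ⟨j, ⟨a + 1, h⟩⟩ else 0 := rfl

lemma rowShift_pow_apply {l : ι → ℕ} (m : ℕ) (v : (Σ j, Fin (l j)) → k) (j : ι) (a : Fin (l j)) :
    (rowShift k l ^ m) v ⟨j, a⟩ = if h : a + m < l j then v ⟨j, ⟨a + m, h⟩⟩ else 0 := by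
  induction m generalizing a with
  | zero => simp
  | succ m ih =>
    simp only [pow_succ', End.mul_apply, rowShift_apply, ih, Nat.add_assoc, Nat.add_comm 1 m]
    split_ifs <;> first | rfl | lia

lemma rowShift_pow_eq_comp (l : ι → ℕ) (m : ℕ) :
    rowShift k l ^ m =
      Function.ExtendByZero.linearMap k (rowInclusion fun j => Nat.sub_le (l j) m) ∘ₗ
        funLeft k k (Sigma.map id fun j (a : Fin (l j - m)) =>
          (⟨a + m, Nat.add_lt_of_lt_sub a.2⟩ : Fin (l j))) := by
  refine LinearMap.ext fun v => funext fun ⟨j, a⟩ => ?_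
  rw [rowShift_pow_apply, LinearMap.comp_apply, Function.ExtendByZero.linearMap_apply]
  have hinj := rowInclusion_injective (p := fun j => l j - m) fun j => Nat.sub_le (l j) m
  split_ifs with h
  · have hbox : rowInclusion (fun j => Nat.sub_le (l j) m) ⟨j, a, Nat.lt_sub_of_add_lt h⟩ =
      ⟨j, a⟩ := rfl
    rw [← hbox, hinj.extend_apply]
    rfl
  · rw [Function.extend_apply', Pi.zero_apply]
    rintro ⟨⟨j', b⟩, hb⟩
    obtain ⟨rfl, hb⟩ := Sigma.mk.inj_iff.1 hb
    obtain rfl := eq_of_heq hb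
    exact h (Nat.add_lt_of_lt_sub b.2)

variable (k) in
/-- The extension of functions on the boxes of the diagram with row lengths `p` to the diagram with
row lengths `l` that has period `p j` along row `j`, and is zero there if `p j = 0`; it is a section
of the restriction along `rowInclusion` when `p ≤ l`. -/
def periodicExtension (p l : ι → ℕ) : ((Σ j, Fin (p j)) → k) →ₗ[k] (Σ j, Fin (l j)) → k where
  toFun u x := if h : 0 < p x.1 then u ⟨x.1, ⟨x.2 % p x.1, Nat.mod_lt _ h⟩⟩ else 0
  map_add' u w := by ext x; dsimp only [Pi.add_apply]; split_ifs <;> simp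
  map_smul' c u := by ext x; dsimp only [Pi.smul_apply]; split_ifs <;> simp

lemma periodicExtension_apply {p l : ι → ℕ} (u : (Σ j, Fin (p j)) → k) {j : ι} (hj : 0 < p j)
    (a : Fin (l j)) :
    periodicExtension k p l u ⟨j, a⟩ = u ⟨j, ⟨a % p j, Nat.mod_lt _ hj⟩⟩ :=
  dif_pos hj

lemma funLeft_comp_periodicExtension {p l : ι → ℕ} (hpl : p ≤ l) :
    funLeft k k (rowInclusion hpl) ∘ₗ periodicExtension k p l = .id := by
  refine LinearMap.ext fun u => funext fun ⟨j, a⟩ => ?_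
  simp [funLeft_apply, rowInclusion_mk, periodicExtension_apply u a.pos, Nat.mod_eq_of_lt]

variable (k) in
/-- The compression of `rowShift k l` to the functions on the first `p j` boxes of every row `j`:
functions are extended with period `p j`, shifted, and restricted again. Periodicity makes it rotate
every row with `p j < l j` cyclically. -/
def rowCompression {p l : ι → ℕ} (hpl : p ≤ l) : End k ((Σ j, Fin (p j)) → k) :=
  funLeft k k (rowInclusion hpl) ∘ₗ rowShift k l ∘ₗ periodicExtension k p l

lemma rowCompression_apply_of_lt {p l : ι → ℕ} (hpl : p ≤ l) (u : (Σ j, Fin (p j)) → k) {j : ι}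
    (hj : p j < l j) (a : Fin (p j)) :
    rowCompression k hpl u ⟨j, a⟩ = u ⟨j, finRotate (p j) a⟩ := by
  have hlt : a + 1 < l j := by lia
  have hrotate : finRotate (p j) a = ⟨(a + 1) % p j, Nat.mod_lt _ a.pos⟩ := by
    simp [finRotate_apply, Fin.ext_iff, Fin.val_add]
  simp [rowCompression, funLeft_apply, rowInclusion_mk, rowShift_apply, hlt,
    periodicExtension_apply u a.pos, hrotate]

variable [Fintype ι]

lemma finrank_range_rowShift_pow {K : Type*} [Field K] (l : ι → ℕ) (m : ℕ) :
    finrank K (range (rowShift K l ^ m)) = ∑ j, (l j - m) := by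
  rw [rowShift_pow_eq_comp, range_comp_of_range_eq_top, finrank_range_of_inj]
  · simp
  · exact Function.extend_injective (rowInclusion_injective _) _
  · refine range_eq_top.2 (funLeft_surjective_of_injective _ _ _ ?_)
    refine Function.injective_id.sigma_map fun j a b hab => ?_
    simpa [Fin.ext_iff] using hab

theorem natTrailingDegree_charpoly_rowCompression_le {K : Type*} [Field K] {p l : ι → ℕ}
    (hpl : p ≤ l) :
    (rowCompression K hpl).charpoly.natTrailingDegree ≤ ∑ j with p j = l j, p j := by
  let g := funLeft K K
    (fun x : Σ j : {j // p j < l j}, Fin (p j) => (⟨x.1, x.2⟩ : Σ j, Fin (p j)))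
  let C := funLeft K K (Equiv.sigmaCongrRight fun j : {j // p j < l j} => finRotate (p j))
  have hg : Function.Surjective g := funLeft_surjective_of_injective _ _ _ <| by
    rintro ⟨⟨_, _⟩, _⟩ ⟨⟨_, _⟩, _⟩ ⟨⟩
    rfl
  have hC : Function.Injective C :=
    funLeft_injective_of_surjective _ _ _ (Equiv.surjective _)
  have hgC : g ∘ₗ rowCompression K hpl = C ∘ₗ g := LinearMap.ext fun u => funext fun ⟨j, a⟩ =>
    rowCompression_apply_of_lt hpl u j.2 a
  have hbound := natTrailingDegree_charpoly_add_finrank_le hg hC hgC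
  have hrows : ∑ j : {j // p j < l j}, p j = ∑ j with ¬ p j = l j, p j :=
    (Finset.sum_subtype _ (by simp [(hpl _).lt_iff_ne]) p).symm
  have hsplit := Finset.sum_filter_add_sum_filter_not Finset.univ (fun j => p j = l j) p
  simp only [finrank_pi, Fintype.card_sigma, Fintype.card_fin] at hbound
  lia

end RowShift

section CompressionBasis

open Module LinearMap

variable {K V U : Type*} [DivisionRing K] [AddCommGroup V] [Module K V] [FiniteDimensional K V]
  [AddCommGroup U] [Module K U] {e : U →ₗ[K] V} {p : V →ₗ[K] U}

lemma exists_basis_extending (hpe : p ∘ₗ e = .id) {i n : ℕ} (hin : i ≤ n) (hn : finrank K V = n)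
    (bU : Basis (Fin i) K U) :
    ∃ b : Basis (Fin n) K V, (∀ a, b (Fin.castLE hin a) = e (bU a)) ∧
      ∀ v a, b.repr v (Fin.castLE hin a) = bU.repr (p v) a := by
  have hpe' (u : U) : p (e u) = u := LinearMap.congr_fun hpe u
  have hker : finrank K (ker p) = n - i := by
    have h := finrank_range_add_finrank_ker p
    rw [range_eq_top.2 fun u => ⟨e u, hpe' u⟩, finrank_top, finrank_eq_card_basis bU,
      Fintype.card_fin] at h
    lia
  let E : V ≃ₗ[K] U × ker p := LinearEquiv.ofLinearMap
    (p.prod ((LinearMap.id - e ∘ₗ p).codRestrict (ker p) fun v => by simp [hpe']))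
    (e.coprod (ker p).subtype)
    (by ext x <;> simp [hpe'])
    (by ext x; simp)
  let σ : Fin i ⊕ Fin (n - i) ≃ Fin n :=
    finSumFinEquiv.trans (finCongr (Nat.add_sub_cancel' hin))
  have hσ (a : Fin i) : σ.symm (Fin.castLE hin a) = .inl a := σ.symm_apply_eq.2 rfl
  refine ⟨((bU.prod (finBasisOfFinrankEq K (ker p) hker)).map E.symm).reindex σ,
    fun a => ?_, fun v a => ?_⟩
  · simp [hσ, E]
  · simp [hσ, E]

end CompressionBasis

open Module in
lemma exists_basis_submatrix_toMatrix {k V U : Type*} [Field k] [AddCommGroup V] [Module k V]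
    [FiniteDimensional k V] [AddCommGroup U] [Module k U] {e : U →ₗ[k] V} {p : V →ₗ[k] U}
    (f : End k V) (hpe : p ∘ₗ e = .id) {i n : ℕ} (hin : i ≤ n) (hn : finrank k V = n)
    (bU : Basis (Fin i) k U) :
    ∃ b : Basis (Fin n) k V,
      (LinearMap.toMatrix b b f).submatrix (Fin.castLE hin) (Fin.castLE hin) =
        LinearMap.toMatrix bU bU (p ∘ₗ f ∘ₗ e) := by
  obtain ⟨b, hb, hrepr⟩ := exists_basis_extending hpe hin hn bU
  exact ⟨b, Matrix.ext fun a c => by simp [LinearMap.toMatrix_apply, hb, hrepr]⟩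

section JordanType

open Module LinearMap

variable {k : Type*} [Field k] {n : ℕ} {l : ℕ → ℕ}

lemma HasJordanType.finrank_range_toLin'_pow {X : Matrix (Fin n) (Fin n) k}
    (hX : HasJordanType X l) (m : ℕ) :
    finrank k (range (X.toLin' ^ m)) = ∑ j ∈ Finset.range n, (l j - m) := by
  rw [← hX m, ← Matrix.toLin'_pow]
  rfl

lemma HasJordanType.pow_eq_zero {X : Matrix (Fin n) (Fin n) k}
    (hX : HasJordanType X l) (hl : IsPartition n l) : X ^ n = 0 := by
  have hrank : finrank k (range (X.toLin' ^ n)) = 0 := by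
    rw [hX.finrank_range_toLin'_pow]
    exact Finset.sum_eq_zero fun j _ => Nat.sub_eq_zero_of_le (hl.le_self j)
  rw [Submodule.finrank_eq_zero, range_eq_bot, ← Matrix.toLin'_pow] at hrank
  exact Matrix.toLin'.map_eq_zero_iff.1 hrank

lemma hasJordanType_toMatrix {V : Type*} [AddCommGroup V] [Module k V] (b : Basis (Fin n) k V)
    {f : End k V} (hf : ∀ m, finrank k (range (f ^ m)) = ∑ j ∈ Finset.range n, (l j - m)) :
    HasJordanType (toMatrix b b f) l := fun m => by
  rw [toMatrix_pow, Matrix.rank_eq_finrank_range_toLin _ b b, Matrix.toLin_toMatrix, hf]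

end JordanType

section SElem

variable {k : Type*} [Field k] {i : ℕ}

lemma sElem_eq_zero {j : ℕ} {Y : Matrix (Fin i) (Fin i) k}
    (hj : i - j < Y.charpoly.natTrailingDegree) : sElem Y j = 0 := by
  rw [sElem, Polynomial.coeff_eq_zero_of_lt_natTrailingDegree hj, mul_zero]

lemma sElem_sub_natTrailingDegree_ne_zero (Y : Matrix (Fin i) (Fin i) k) :
    sElem Y (i - Y.charpoly.natTrailingDegree) ≠ 0 := by
  have hle : Y.charpoly.natTrailingDegree ≤ i := by
    simpa using Y.charpoly.natTrailingDegree_le_natDegree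
  rw [sElem, Nat.sub_sub_self hle]
  exact mul_ne_zero (pow_ne_zero _ (neg_ne_zero.2 one_ne_zero))
    (Polynomial.trailingCoeff_nonzero_iff_nonzero.2 Y.charpoly_monic.ne_zero)

end SElem

section CharpolyBounds

open Module LinearMap

variable {k : Type*} [Field k] {n i : ℕ} {l : ℕ → ℕ}

theorem IsPartition.sum_Ico_le_natTrailingDegree_charpoly (hl : IsPartition n l)
    (hin : i ≤ n) {X : Matrix (Fin n) (Fin n) k} (hX : HasJordanType X l) :
    ∑ j ∈ Finset.Ico (n - i) n, l j ≤
      (X.submatrix (Fin.castLE hin) (Fin.castLE hin)).charpoly.natTrailingDegree := by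
  have hc := Fin.castLE_injective hin
  have hN : X.toLin' ^ n = 0 := by rw [← Matrix.toLin'_pow, hX.pow_eq_zero hl, map_zero]
  have hbound := finrank_le_natTrailingDegree_charpoly_compression_add_sum_min
    (funLeft_comp_extendByZero hc) hN
  rw [← toLin'_submatrix hc, Matrix.charpoly_toLin', finrank_ker_funLeft hc] at hbound
  simp only [hX.finrank_range_toLin'_pow, finrank_fin_fun, Fintype.card_fin] at hbound
  have hlayers := sum_min_sum_tsub_sub_le_of_antitone hl.1 (n - i) n n
  have htotal := hl.sum_range_add_sum_Ico (Nat.sub_le n i)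
  lia

theorem IsPartition.exists_hasJordanType_natTrailingDegree_charpoly_le (hl : IsPartition n l)
    (hin : i ≤ n) :
    ∃ X : Matrix (Fin n) (Fin n) k, HasJordanType X l ∧
      (X.submatrix (Fin.castLE hin) (Fin.castLE hin)).charpoly.natTrailingDegree ≤
        ∑ j ∈ Finset.Ico (n - i) n, l j := by
  obtain ⟨p, hpl, hsum, hkept⟩ := hl.exists_le_sum_eq_sum_filter_le hin
  let rows : Fin n → ℕ := fun j => l j
  let keptRows : Fin n → ℕ := fun j => p j
  have hle : keptRows ≤ rows := fun j => hpl j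
  have hrange (m : ℕ) : finrank k (range (rowShift k rows ^ m)) =
      ∑ j ∈ Finset.range n, (l j - m) := by
    rw [finrank_range_rowShift_pow, Fin.sum_univ_eq_sum_range (fun j => l j - m)]
  have hV : finrank k ((Σ j, Fin (rows j)) → k) = n := by
    simp [rows, Fin.sum_univ_eq_sum_range l, hl.2.2]
  have hU : finrank k ((Σ j, Fin (keptRows j)) → k) = i := by
    simp [keptRows, Fin.sum_univ_eq_sum_range p, hsum]
  obtain ⟨b, hb⟩ := exists_basis_submatrix_toMatrix (rowShift k rows)
    (funLeft_comp_periodicExtension hle) hin hV (finBasisOfFinrankEq k _ hU)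
  refine ⟨toMatrix b b (rowShift k rows), hasJordanType_toMatrix b hrange, ?_⟩
  rw [hb, charpoly_toMatrix]
  refine (natTrailingDegree_charpoly_rowCompression_le hle).trans (le_of_eq_of_le ?_ hkept)
  rw [Finset.sum_filter, Finset.sum_filter,
    ← Fin.sum_univ_eq_sum_range fun j => if p j = l j then p j else 0]

end CharpolyBounds

/-- For a partition `λ` of `n` and `1 ≤ i ≤ n - 1`:
(a) for every nilpotent `n × n` matrix `X` of Jordan type `λ` and every `j` with
`d_{λ,i} < j ≤ i` one has `s_j(X_{≤i,≤i}) = 0`; and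
(b) there exists a nilpotent `n × n` matrix `X` of Jordan type `λ` with
`s_{d_{λ,i}}(X_{≤i,≤i}) ≠ 0`. -/
theorem sElem_vanishing_and_nonvanishing {k : Type*} [Field k] (n : ℕ)
    (l : ℕ → ℕ) (hl : IsPartition n l) (i : ℕ) (hi1 : 1 ≤ i) (hin : i < n) :
    (∀ X : Matrix (Fin n) (Fin n) k, IsNilpotent X → HasJordanType X l →
      ∀ j, dPart n l i < j → j ≤ i →
        sElem (X.submatrix (Fin.castLE hin.le) (Fin.castLE hin.le)) j = 0) ∧
    (∃ X : Matrix (Fin n) (Fin n) k, IsNilpotent X ∧ HasJordanType X l ∧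
      sElem (X.submatrix (Fin.castLE hin.le) (Fin.castLE hin.le)) (dPart n l i) ≠ 0) := by
  refine ⟨fun X _ hX j hdj _ => sElem_eq_zero ?_, ?_⟩
  · have hvanish := hl.sum_Ico_le_natTrailingDegree_charpoly hin.le hX
    have htail := hl.sum_Ico_le i
    rw [dPart] at hdj
    lia
  · obtain ⟨X, hX, hle⟩ :=
      hl.exists_hasJordanType_natTrailingDegree_charpoly_le (k := k) hin.le
    have horder := hle.antisymm (hl.sum_Ico_le_natTrailingDegree_charpoly hin.le hX)
    refine ⟨X, ⟨n, hX.pow_eq_zero hl⟩, hX, ?_⟩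
    rw [dPart, ← horder]
    exact sElem_sub_natTrailingDegree_ne_zero _
end
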